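/- Let (A, φ) be a *-probability space with φ tracial (φ(ab) = φ(ba) for all a, b ∈ A), let u ∈ A be a unitary (u*u = uu* = 1), and let x, y ∈ A. If both the pair (x, y) and the pair (ux, uy) satisfy condition (3.6), then (x, y) and (ux, uy) have the same bi-*-distribution. -/

import Mathlib

section
variable {A : Type*} [Ring A] [Algebra ℂ A] [StarRing A] [StarModule ℂ A]

/-- The alternating product `x^{ω(1)} ⋯ x^{ω(k₁)} y^{ω(k₁+1)} ⋯ y^{ω(m)}`:
the first `k₁` letters are from `{x, x*}`, the remaining ones from `{y, y*}`,
with star-parities given by `ω` (`true` = starred). -/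
def altProd (x y : A) (m k₁ : ℕ) (ω : Fin m → Bool) : A :=
  (List.ofFn (fun t : Fin m =>
    if t.val < k₁ then (if ω t then star x else x)
    else (if ω t then star y else y))).prod

/-- The factor of the sets `P_{i,j}(x,y)`: for odd length the alternating product itself,
for even length the centered alternating product `z - φ(z)·1`. -/
noncomputable def facElt (φ : A → ℂ) (x y : A) (m k₁ : ℕ) (ω : Fin m → Bool) : A :=
  if Odd m then altProd x y m k₁ ω
  else altProd x y m k₁ ω - φ (altProd x y m k₁ ω) • (1 : A)

/-- Condition (3.6): the expectations of the admissible products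
`p_{i₁,i₂} p_{i₂,i₃} ⋯ p_{i_{n-1},i_n}` of factors from the sets `P_{i,j}(x,y)` vanish.
Factor `i` is an alternating word of length `len i ≥ 1` with `kk i` letters from
`{x, x*}` followed by `len i - kk i` letters from `{y, y*}`; the chain condition links the
second index of each factor with the first index of the next one; and the factors are
ordered so that either (i) the `x`-only factors precede the `y`-only factors, or (ii)
exactly one factor mixes letters of both types, with `x`-only factors before it and
`y`-only factors after it. -/
noncomputable def Condition36 (φ : A → ℂ) (x y : A) : Prop :=
  ∀ N : ℕ, 1 ≤ N → ∀ len kk : Fin N → ℕ, ∀ ω : (i : Fin N) → Fin (len i) → Bool,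
    (∀ i, 1 ≤ len i) →
    (∀ i, kk i ≤ len i) →
    (∀ i, (List.ofFn (ω i)).Chain' (· ≠ ·)) →
    (∀ i : Fin N, ∀ h : i.val + 1 < N,
      (List.ofFn (ω ⟨i.val + 1, h⟩)).headD false =
        (if Odd (len i) then (List.ofFn (ω i)).headD false
          else !(List.ofFn (ω i)).headD false)) →
    ((∃ m : ℕ, m ≤ N ∧ (∀ i : Fin N, i.val < m → kk i = len i) ∧
        (∀ i : Fin N, m ≤ i.val → kk i = 0)) ∨
     (∃ m : Fin N, (∀ i : Fin N, i.val < m.val → kk i = len i) ∧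
        0 < kk m ∧ kk m < len m ∧ (∀ i : Fin N, m.val < i.val → kk i = 0))) →
    φ (List.ofFn (fun i => facElt φ x y (len i) (kk i) (ω i))).prod = 0

/-- The pairs `(x, y)` and `(x', y')` have the same bi-`*`-distribution. -/
def SameBiDist (φ : A → ℂ) (x y x' y' : A) : Prop :=
  ∀ n : ℕ, 1 ≤ n → ∀ k : ℕ, k ≤ n → ∀ ω : Fin n → Bool,
    φ (altProd x y n k ω) = φ (altProd x' y' n k ω)

/-- A Haar unitary. -/
def IsHaarUnitary (φ : A → ℂ) (u : A) : Prop :=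
  u * star u = 1 ∧ star u * u = 1 ∧
  ∀ n : ℕ, 1 ≤ n → φ (u ^ n) = 0 ∧ φ ((star u) ^ n) = 0

/-- `*`-freeness of a family of subsets: alternating products of centered elements of the
generated unital `*`-subalgebras have zero expectation. -/
def FreeFamily (φ : A → ℂ) {ι : Type*} (S : ι → Set A) : Prop :=
  ∀ m : ℕ, 1 ≤ m → ∀ idx : Fin m → ι,
    (∀ i : Fin m, ∀ h : i.val + 1 < m, idx i ≠ idx ⟨i.val + 1, h⟩) →
    ∀ a : Fin m → A,
      (∀ i, a i ∈ StarAlgebra.adjoin ℂ (S (idx i)) ∧ φ (a i) = 0) →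
      φ (List.ofFn a).prod = 0

end

/-!
Cut a word `w` in `x, x*, y, y*` after each pair of consecutive letters with equal star-parity. The
blocks alternate, and condition (3.6) says that the product of the blocks, those of even length
being centered, has expectation zero. Expanding this product writes `φ(w)` as a combination
of moments of shorter words whose coefficients are moments of alternating words of even length;
by induction, (3.6) thus determines all moments from the latter. Passing from `(x, y)` to
`(ux, uy)` turns an alternating word `z` of even length into `z` or `uzu*`, as inner factors `u*u`
cancel, so these moments do not change.
-/

section LinearFunctional
variable {ι k R M : Type*} [CommSemiring k] [Ring R] [Algebra k R] [AddCommGroup M] [Module k M]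

theorem map_mul_prod_sub_smul_one (D : R →ₗ[k] M) (f : ι → R) (c : ι → k) (L : List ι) (p : R)
    (hD : ∀ K : List ι, K.Sublist L → K.length < L.length → D (p * (K.map f).prod) = 0) :
    D (p * (L.map fun i ↦ f i - c i • 1).prod) = D (p * (L.map f).prod) := by
  induction L generalizing p with
  | nil => simp
  | cons i L ih =>
    have keep_head : D (p * f i * (L.map fun i ↦ f i - c i • 1).prod) =
        D (p * f i * (L.map f).prod) :=
      ih _ fun K hK hlt ↦ by
        simpa [mul_assoc] using hD (i :: K) (hK.cons_cons i) (by simpa using hlt)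
    have drop_head : D (p * (L.map fun i ↦ f i - c i • 1).prod) = 0 :=
      (ih p fun K hK hlt ↦ hD K (hK.cons i) (by simpa using hlt.trans (Nat.lt_succ_self _))).trans
        (hD L (List.sublist_cons_self i L) (by simp))
    calc D (p * ((i :: L).map fun i ↦ f i - c i • 1).prod)
        = D (p * f i * (L.map fun i ↦ f i - c i • 1).prod) -
            c i • D (p * (L.map fun i ↦ f i - c i • 1).prod) := by
          simp only [List.map_cons, List.prod_cons, ← map_smul, ← map_sub, sub_mul, mul_sub,
            smul_mul_assoc, mul_smul_comm, one_mul, mul_assoc]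
      _ = D (p * ((i :: L).map f).prod) := by
          rw [keep_head, drop_head, smul_zero, sub_zero, List.map_cons, List.prod_cons, mul_assoc]

theorem map_prod_sub_smul_one_sub_map {S : Type*} [Ring S] [Algebra k S] (φ : R →ₗ[k] M)
    (ψ : S →ₗ[k] M) (f : ι → R) (g : ι → S) (c : ι → k) (L : List ι)
    (h : ∀ K : List ι, K.Sublist L → K.length < L.length → φ (K.map f).prod = ψ (K.map g).prod) :
    φ (L.map fun i ↦ f i - c i • 1).prod - ψ (L.map fun i ↦ g i - c i • 1).prod =
      φ (L.map f).prod - ψ (L.map g).prod := by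
  let D : R × S →ₗ[k] M := φ ∘ₗ .fst k R S - ψ ∘ₗ .snd k R S
  have D_prod (K : List ι) (F : ι → R × S) :
      D (K.map F).prod = φ (K.map fun i ↦ (F i).1).prod - ψ (K.map fun i ↦ (F i).2).prod := by
    have hfst := map_list_prod (MonoidHom.fst R S) (K.map F)
    have hsnd := map_list_prod (MonoidHom.snd R S) (K.map F)
    simp only [MonoidHom.coe_fst, MonoidHom.coe_snd, List.map_map] at hfst hsnd
    exact congrArg₂ (φ · - ψ ·) hfst hsnd
  have hD := map_mul_prod_sub_smul_one D (fun i ↦ (f i, g i)) c L 1 fun K hK hlt ↦ by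
    rw [one_mul, D_prod, sub_eq_zero]
    exact h K hK hlt
  rw [one_mul, one_mul, D_prod, D_prod] at hD
  exact hD

end LinearFunctional

theorem length_flatten_lt_of_sublist {α : Type*} {K L : List (List α)} (h : K.Sublist L)
    (hlt : K.length < L.length) (hL : ∀ b ∈ L, b ≠ []) : K.flatten.length < L.flatten.length := by
  induction h with
  | slnil => simp at hlt
  | @cons K L b hKL _ =>
    have := hKL.flatten.length_le
    have := List.length_pos_iff.mpr (hL b (by simp))
    simp only [List.flatten_cons, List.length_append]
    omega
  | cons_cons b _ ih =>
    simpa using ih (by simpa using hlt) fun c hc ↦ hL c (by simp [hc])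

/-- One of the four letters `x`, `x*`, `y`, `y*`. -/
structure BiLetter where
  /-- Whether the letter is `y` or `y*`. -/
  isY : Bool
  /-- Whether the letter is `x*` or `y*`. -/
  isStar : Bool

/-- The letters `x`, `x*` precede the letters `y`, `y*`: these are the words whose expectations
make up the bi-`*`-distribution. -/
def XBeforeY (w : List BiLetter) : Prop := w.Pairwise fun a b ↦ a.isY → b.isY

/-- Starred and unstarred letters alternate. -/
def Alternating (w : List BiLetter) : Prop := w.IsChain (·.isStar ≠ ·.isStar)

/-- The decomposition of a word into its maximal alternating blocks. -/
def altBlocks (w : List BiLetter) : List (List BiLetter) :=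
  w.splitBy (·.isStar != ·.isStar)

/-- The number of letters before the first `y` or `y*`. For words in which the letters `x`, `x*`
come first this is the parameter `k₁` of `altProd`. -/
def xLength (w : List BiLetter) : ℕ := w.findIdx BiLetter.isY

theorem XBeforeY.sublist {v w : List BiLetter} (hw : XBeforeY w) (h : v.Sublist w) : XBeforeY v :=
  List.Pairwise.sublist h hw

theorem XBeforeY.lt_xLength_iff {w : List BiLetter} (hw : XBeforeY w) {t : ℕ} (ht : t < w.length) :
    t < xLength w ↔ w[t].isY = false := by
  refine ⟨List.not_of_lt_findIdx, fun h ↦ List.lt_findIdx_of_not ht fun j hj hjY ↦ ?_⟩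
  obtain rfl | hlt := hj.eq_or_lt
  · simp [h] at hjY
  · simpa [h] using List.pairwise_iff_getElem.mp hw j t _ ht hlt hjY

theorem xLength_eq_zero {w : List BiLetter} (hw : ∀ a ∈ w, a.isY) : xLength w = 0 := by
  cases w with
  | nil => rfl
  | cons a w => simp [xLength, List.findIdx_cons, hw a]

theorem xBeforeY_ofFn (n k : ℕ) (ω : Fin n → Bool) :
    XBeforeY (List.ofFn fun t ↦ ⟨decide (k ≤ t), ω t⟩) := by
  refine List.pairwise_ofFn.mpr fun i j hij ↦ ?_
  simpa using fun hk : k ≤ i ↦ hk.trans hij.le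

theorem Alternating.isStar_getLast {a : BiLetter} {w : List BiLetter} (h : Alternating (a :: w)) :
    ((a :: w).getLast (by simp)).isStar =
      if Odd (a :: w).length then a.isStar else !a.isStar := by
  induction w generalizing a with
  | nil => simp
  | cons b w ih =>
    obtain ⟨hab, hbw⟩ := List.isChain_cons_cons.mp h
    simp only [List.getLast_cons_cons, ih hbw, Bool.eq_not_of_ne hab.symm,
      List.length_cons (a := a), Nat.odd_add_one]
    split_ifs <;> simp

theorem flatten_altBlocks (w : List BiLetter) : (altBlocks w).flatten = w :=
  List.flatten_splitBy _ w

theorem ne_nil_of_mem_altBlocks {w b : List BiLetter} (hb : b ∈ altBlocks w) : b ≠ [] :=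
  List.ne_nil_of_mem_splitBy hb

theorem alternating_of_mem_altBlocks {w b : List BiLetter} (hb : b ∈ altBlocks w) :
    Alternating b := by
  simpa [Alternating] using List.isChain_of_mem_splitBy hb

/-- The clauses (i) and (ii) of `Condition36`; the cut is at the first block containing `y` or
`y*`. -/
theorem XBeforeY.blocks_pure_or_one_mixed {L : List (List BiLetter)} (hL : XBeforeY L.flatten) :
    (∃ m ≤ L.length, (∀ i : Fin L.length, i < m → xLength L[i] = L[i].length) ∧
      ∀ i : Fin L.length, m ≤ i → xLength L[i] = 0) ∨
    ∃ m : Fin L.length, (∀ i : Fin L.length, i.val < m.val → xLength L[i] = L[i].length) ∧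
      0 < xLength L[m] ∧ xLength L[m] < L[m].length ∧
      ∀ i : Fin L.length, m.val < i.val → xLength L[i] = 0 := by
  set m := L.findIdx (·.any BiLetter.isY)
  have hbefore (i : Fin L.length) (hi : i < m) : xLength L[i] = L[i].length :=
    List.findIdx_eq_length.mpr (by simpa using List.not_of_lt_findIdx hi)
  obtain hmL | hmL := (List.findIdx_le_length : m ≤ L.length).eq_or_lt
  · exact .inl ⟨m, hmL.le, hbefore, fun i hi ↦ absurd i.isLt (by omega)⟩
  have hY : ∃ a ∈ L[m], a.isY := by simpa using List.findIdx_getElem (w := hmL)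
  have hafter (i : Fin L.length) (hi : m < i) : xLength L[i] = 0 := by
    obtain ⟨a, ha, haY⟩ := hY
    exact xLength_eq_zero fun c hc ↦ List.pairwise_iff_getElem.mp
      (List.pairwise_flatten.mp hL).2 m i hmL i.isLt hi a ha c hc haY
  obtain h0 | hpos := (xLength L[m]).eq_zero_or_pos
  · refine .inl ⟨m, hmL.le, hbefore, fun i hi ↦ ?_⟩
    obtain h | h := hi.eq_or_lt
    · simpa [h] using h0
    · exact hafter i h
  · exact .inr ⟨⟨m, hmL⟩, hbefore, hpos, List.findIdx_lt_length.mpr hY, hafter⟩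

section Evaluation
variable {A : Type*}

/-- The element of `A` denoted by a letter, given the values of `x` and `y`. -/
def BiLetter.eval [Star A] (x y : A) (a : BiLetter) : A :=
  if a.isY then (if a.isStar then star y else y) else (if a.isStar then star x else x)

/-- The element of `A` denoted by a word, given the values of `x` and `y`. -/
def wordEval [Monoid A] [Star A] (x y : A) (w : List BiLetter) : A :=
  (w.map (BiLetter.eval x y)).prod

theorem wordEval_cons [Monoid A] [Star A] (x y : A) (a : BiLetter) (w : List BiLetter) :
    wordEval x y (a :: w) = a.eval x y * wordEval x y w := by
  simp [wordEval]

theorem wordEval_flatten [Monoid A] [Star A] (x y : A) (L : List (List BiLetter)) :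
    wordEval x y L.flatten = (L.map (wordEval x y)).prod := by
  rw [wordEval, List.map_flatten, List.prod_flatten, List.map_map]
  rfl

theorem altProd_eq_wordEval [Ring A] [StarRing A] (x y : A) (n k : ℕ) (ω : Fin n → Bool) :
    altProd x y n k ω = wordEval x y (List.ofFn fun t ↦ ⟨decide (k ≤ t), ω t⟩) := by
  simp only [altProd, wordEval, List.map_ofFn]
  congr! 3 with t
  by_cases h : k ≤ t <;> simp [BiLetter.eval, h]

theorem XBeforeY.altProd_eq_wordEval [Ring A] [StarRing A] (x y : A) {w : List BiLetter}
    (hw : XBeforeY w) :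
    altProd x y w.length (xLength w) (fun t ↦ w[t].isStar) = wordEval x y w := by
  rw [altProd, wordEval]
  congr 1
  refine List.ext_getElem (by simp) fun t _ ht ↦ ?_
  have ht : t < w.length := by simpa using ht
  cases h : w[t].isY <;> simp [BiLetter.eval, hw.lt_xLength_iff ht, h]

end Evaluation

section Condition36
variable {A B : Type*} [Ring A] [Algebra ℂ A] [StarRing A] [Ring B] [Algebra ℂ B] [StarRing B]

/-- The constant subtracted from the word `w` in `facElt`. -/
noncomputable def centering (φ : A → ℂ) (x y : A) (w : List BiLetter) : ℂ :=
  if Odd w.length then 0 else φ (wordEval x y w)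

/-- The counterpart of `facElt` for words: only words of even length are centered. -/
noncomputable def centeredWord (φ : A → ℂ) (x y : A) (w : List BiLetter) : A :=
  wordEval x y w - centering φ x y w • 1

theorem XBeforeY.facElt_eq_centeredWord (φ : A → ℂ) (x y : A) {w : List BiLetter}
    (hw : XBeforeY w) :
    facElt φ x y w.length (xLength w) (fun t ↦ w[t].isStar) = centeredWord φ x y w := by
  simp only [facElt, centeredWord, centering, hw.altProd_eq_wordEval]
  split_ifs <;> simp

theorem Condition36.apply_prod_centeredWord {φ : A → ℂ} {x y : A} (h36 : Condition36 φ x y)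
    {L : List (List BiLetter)} (hL : L ≠ []) (hne : ∀ b ∈ L, b ≠ []) (halt : ∀ b ∈ L, Alternating b)
    (hlink : L.IsChain fun b c ↦
      ∃ (hb : b ≠ []) (hc : c ≠ []), (b.getLast hb).isStar = (c.head hc).isStar)
    (hsort : XBeforeY L.flatten) : φ (L.map (centeredWord φ x y)).prod = 0 := by
  have hmem (i : Fin L.length) : L[i] ∈ L := List.getElem_mem _
  have hfac (i : Fin L.length) : facElt φ x y L[i].length (xLength L[i]) (fun t ↦ L[i][t].isStar) =
      centeredWord φ x y L[i] :=
    (hsort.sublist (List.sublist_flatten_of_mem (hmem i))).facElt_eq_centeredWord φ x y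
  have hprod : L.map (centeredWord φ x y) = List.ofFn fun i : Fin L.length ↦
      facElt φ x y L[i].length (xLength L[i]) (fun t ↦ L[i][t].isStar) := by
    simp only [hfac]
    exact (List.ofFn_getElem_eq_map L _).symm
  rw [hprod]
  refine h36 L.length (List.length_pos_iff.mpr hL) (fun i ↦ L[i].length) (fun i ↦ xLength L[i])
    (fun i t ↦ L[i][t].isStar) (fun i ↦ List.length_pos_iff.mpr (hne _ (hmem i)))
    (fun i ↦ List.findIdx_le_length) (fun i ↦ ?_) (fun i hi ↦ ?_) hsort.blocks_pure_or_one_mixed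
  · exact (List.ofFn_getElem_eq_map L[i] BiLetter.isStar).symm ▸
      (List.isChain_map _).mpr (halt _ (hmem i))
  · obtain ⟨hb, hc, hbc⟩ := List.isChain_iff_getElem.mp hlink i hi
    have halt_i := halt _ (hmem i)
    simp only [Fin.getElem_fin] at halt_i ⊢
    obtain ⟨a, v, hv⟩ := List.exists_cons_of_ne_nil hb
    obtain ⟨c, v', hv'⟩ := List.exists_cons_of_ne_nil hc
    simp only [hv, hv'] at halt_i hbc ⊢
    simpa [halt_i.isStar_getLast] using hbc.symm

theorem Condition36.apply_prod_altBlocks {φ : A → ℂ} {x y : A} (h36 : Condition36 φ x y)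
    {w : List BiLetter} (hne : w ≠ []) (hw : XBeforeY w) :
    φ ((altBlocks w).map (centeredWord φ x y)).prod = 0 := by
  refine h36.apply_prod_centeredWord (List.splitBy_ne_nil.mpr hne)
    (fun _ ↦ ne_nil_of_mem_altBlocks) (fun _ ↦ alternating_of_mem_altBlocks) ?_
    (by rwa [flatten_altBlocks])
  simpa only [bne_eq_false_iff_eq, altBlocks] using
    List.isChain_getLast_head_splitBy (fun a b : BiLetter ↦ a.isStar != b.isStar) w

theorem Condition36.apply_wordEval_eq {φ : A →ₗ[ℂ] ℂ} {ψ : B →ₗ[ℂ] ℂ} {x y : A} {x' y' : B}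
    (hφ : Condition36 φ x y) (hψ : Condition36 ψ x' y')
    (heven : ∀ w, XBeforeY w → Alternating w → Even w.length →
      φ (wordEval x y w) = ψ (wordEval x' y' w))
    {w : List BiLetter} (hw : XBeforeY w) : φ (wordEval x y w) = ψ (wordEval x' y' w) := by
  induction hn : w.length using Nat.strong_induction_on generalizing w with
  | h n ih =>
    subst hn
    obtain rfl | hne := eq_or_ne w []
    · exact heven [] hw .nil (by simp)
    have hcenter : ∀ b ∈ altBlocks w, centering φ x y b = centering ψ x' y' b := by
      intro b hb
      unfold centering
      split_ifs with hodd
      · rfl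
      · exact heven b (hw.sublist (flatten_altBlocks w ▸ List.sublist_flatten_of_mem hb))
          (alternating_of_mem_altBlocks hb) (Nat.not_odd_iff_even.mp hodd)
    have hshorter (K : List (List BiLetter)) (hK : K.Sublist (altBlocks w))
        (hlt : K.length < (altBlocks w).length) :
        φ (K.map (wordEval x y)).prod = ψ (K.map (wordEval x' y')).prod := by
      have hlen : K.flatten.length < w.length := by
        simpa only [flatten_altBlocks] using
          length_flatten_lt_of_sublist hK hlt fun _ ↦ ne_nil_of_mem_altBlocks
      rw [← wordEval_flatten, ← wordEval_flatten]
      exact ih _ hlen (hw.sublist (flatten_altBlocks w ▸ hK.flatten)) rfl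
    have hx : φ ((altBlocks w).map fun b ↦ wordEval x y b - centering φ x y b • 1).prod = 0 :=
      hφ.apply_prod_altBlocks hne hw
    have hx' : ψ ((altBlocks w).map fun b ↦ wordEval x' y' b - centering φ x y b • 1).prod = 0 := by
      rw [List.map_congr_left fun b hb ↦ by rw [hcenter b hb]]
      exact hψ.apply_prod_altBlocks hne hw
    have key := map_prod_sub_smul_one_sub_map φ ψ (wordEval x y) (wordEval x' y') (centering φ x y)
      (altBlocks w) hshorter
    rwa [hx, hx', sub_self, ← wordEval_flatten, ← wordEval_flatten, flatten_altBlocks, eq_comm,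
      sub_eq_zero] at key

end Condition36

section Isometry
variable {A : Type*} [Monoid A] [StarMul A]

/-- The factor which replacing `(x, y)` by `(ux, uy)` puts to the left of a letter with star-parity
`s`; the factor to its right is `star (leftFactor u (!s))`. -/
def leftFactor (u : A) (s : Bool) : A := if s then 1 else u

theorem star_leftFactor_mul_self {u : A} (hu : star u * u = 1) (s : Bool) :
    star (leftFactor u s) * leftFactor u s = 1 := by
  cases s <;> simp [leftFactor, hu]

theorem BiLetter.eval_mul_left (u x y : A) (a : BiLetter) :
    a.eval (u * x) (u * y) =
      leftFactor u a.isStar * a.eval x y * star (leftFactor u (!a.isStar)) := by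
  obtain ⟨_ | _, _ | _⟩ := a <;> simp [BiLetter.eval, leftFactor]

theorem Alternating.wordEval_mul_left {u : A} (hu : star u * u = 1) (x y : A) {a : BiLetter}
    {w : List BiLetter} (h : Alternating (a :: w)) :
    wordEval (u * x) (u * y) (a :: w) = leftFactor u a.isStar * wordEval x y (a :: w) *
      star (leftFactor u (!((a :: w).getLast (by simp)).isStar)) := by
  induction w generalizing a with
  | nil => simp [wordEval, BiLetter.eval_mul_left]
  | cons b w ih =>
    obtain ⟨hab, hbw⟩ := List.isChain_cons_cons.mp h
    rw [wordEval_cons, ih hbw, BiLetter.eval_mul_left, Bool.eq_not_of_ne hab.symm,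
      wordEval_cons x y a, List.getLast_cons_cons]
    simp only [mul_assoc]
    rw [← mul_assoc (star _), star_leftFactor_mul_self hu, one_mul]

theorem Alternating.apply_wordEval_mul_left {M : Type*} {φ : A → M} {u : A} (hu : star u * u = 1)
    (hφ : ∀ a, φ (u * a * star u) = φ a) (x y : A) {w : List BiLetter} (hw : Alternating w)
    (heven : Even w.length) : φ (wordEval (u * x) (u * y) w) = φ (wordEval x y w) := by
  cases w with
  | nil => rfl
  | cons a w =>
    rw [hw.wordEval_mul_left hu, hw.isStar_getLast, if_neg (Nat.not_odd_iff_even.mpr heven),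
      Bool.not_not]
    cases a.isStar <;> simp [leftFactor, hφ]

end Isometry

theorem sameBiDist_of_both_condition36_general {A : Type*} [Ring A] [Algebra ℂ A] [StarRing A]
    (φ : A →ₗ[ℂ] ℂ) {x y u : A} (hu : star u * u = 1) (hφu : ∀ a, φ (u * a * star u) = φ a)
    (h36 : Condition36 φ x y) (h36u : Condition36 φ (u * x) (u * y)) :
    SameBiDist φ x y (u * x) (u * y) := by
  intro n _ k _ ω
  simp only [altProd_eq_wordEval]
  exact h36.apply_wordEval_eq h36u
    (fun _ _ halt heven ↦ (halt.apply_wordEval_mul_left hu hφu x y heven).symm)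
    (xBeforeY_ofFn n k ω)

/-- In a tracial `*`-probability space, if both `(x, y)` and `(ux, uy)` (with `u` a
unitary) satisfy condition (3.6), then `(x, y)` and `(ux, uy)` have the same
bi-`*`-distribution. -/
theorem sameBiDist_of_both_condition36
    {A : Type*} [Ring A] [Algebra ℂ A] [StarRing A] [StarModule ℂ A]
    (φ : A →ₗ[ℂ] ℂ) (hφ1 : φ 1 = 1) (hφs : ∀ a : A, φ (star a) = starRingEnd ℂ (φ a))
    (htr : ∀ a b : A, φ (a * b) = φ (b * a))
    (x y u : A) (hu : u * star u = 1 ∧ star u * u = 1)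
    (h36 : Condition36 (fun z => φ z) x y)
    (h36u : Condition36 (fun z => φ z) (u * x) (u * y)) :
    SameBiDist (fun z => φ z) x y (u * x) (u * y) := by
  refine sameBiDist_of_both_condition36_general φ hu.2 (fun a ↦ ?_) h36 h36u
  rw [htr, ← mul_assoc, hu.2, one_mul]
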